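/- Let (X,d_X,μ_X) and (Y,d_Y,μ_Y) be metric measure spaces with μ_X σ-finite, μ_Y locally finite and μ_{X×Y} a Radon measure. If (X,d_X,μ_X) satisfies PL and (Y,d_Y,μ_Y) satisfies BM(0), then (X×Y,ρ,μ_{X×Y}) satisfies BM(0). -/

import Mathlib

open MeasureTheory Set Metric Filter
open scoped ENNReal NNReal Topology Pointwise

noncomputable section

/-- The `d`-convex combination `(1-λ)A ⋆_d λB` of two sets. -/
def starComb {Z : Type*} (d : Z → Z → ℝ) (lam : ℝ) (A B : Set Z) : Set Z :=
  {z | ∃ a ∈ A, ∃ b ∈ B, d z a = lam * d a b ∧ d z b = (1 - lam) * d a b}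

/-- A distance is strictly intrinsic: closed balls of radii summing to the distance
between their centers intersect. -/
def StrictlyIntrinsicDist {Z : Type*} (d : Z → Z → ℝ) : Prop :=
  ∀ x y : Z, ∀ r₁ r₂ : ℝ, 0 ≤ r₁ → 0 ≤ r₂ → r₁ + r₂ = d x y →
    ∃ z : Z, d z x ≤ r₁ ∧ d z y ≤ r₂

/-- The ℓ² (Euclidean) product metric on `X × Y`. -/
def rho {X Y : Type*} [PseudoMetricSpace X] [PseudoMetricSpace Y] (a b : X × Y) : ℝ :=
  Real.sqrt (dist a.1 b.1 ^ 2 + dist a.2 b.2 ^ 2)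

/-- The ℓ² (Euclidean) metric on a finite product of copies of a metric space. -/
def rhoPi {ι : Type*} [Fintype ι] {X : Type*} [PseudoMetricSpace X] (a b : ι → X) : ℝ :=
  Real.sqrt (∑ i, dist (a i) (b i) ^ 2)

open Classical in
/-- The `p`-th mean `M_p(a,b,λ)` of `a, b ∈ [0,∞]`, for `p ∈ ℝ ∪ {±∞}`, with the
convention that it vanishes whenever `a * b = 0`. -/
def Mp (p : EReal) (lam : ℝ) (a b : ℝ≥0∞) : ℝ≥0∞ :=
  if a = 0 ∨ b = 0 then 0
  else if p = ⊤ then max a b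
  else if p = ⊥ then min a b
  else if p = 0 then a ^ (1 - lam) * b ^ lam
  else (ENNReal.ofReal (1 - lam) * a ^ p.toReal + ENNReal.ofReal lam * b ^ p.toReal) ^ (1 / p.toReal)

open Classical in
/-- The `p`-th mean `M_p(a,b,λ)` of nonnegative reals, with the zero convention. -/
def MpR (p : EReal) (lam a b : ℝ) : ℝ :=
  if a = 0 ∨ b = 0 then 0
  else if p = ⊤ then max a b
  else if p = ⊥ then min a b
  else if p = 0 then a ^ (1 - lam) * b ^ lam
  else ((1 - lam) * a ^ p.toReal + lam * b ^ p.toReal) ^ (1 / p.toReal)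

/-- `(X,d,μ)` satisfies `BM(p)`. -/
def SatisfiesBM {X : Type*} [MeasurableSpace X] (d : X → X → ℝ) (μ : Measure X)
    (p : EReal) : Prop :=
  ∀ lam : ℝ, lam ∈ Ioo (0:ℝ) 1 → ∀ A B C : Set X, A.Nonempty → B.Nonempty →
    MeasurableSet A → MeasurableSet B → MeasurableSet C →
    μ A ≠ 0 → μ B ≠ 0 → starComb d lam A B ⊆ C →
    Mp p lam (μ A) (μ B) ≤ μ C

/-- `(X,d,μ)` satisfies the general (linear) inequality `B̄M(1)`:
`μ(C) ≥ (1-λ)μ(A) + λμ(B)` for all nonempty measurable `A, B, C` with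
`C ⊇ (1-λ)A ⋆ λB`. -/
def SatisfiesBMbarLinear {X : Type*} [MeasurableSpace X] (d : X → X → ℝ)
    (μ : Measure X) : Prop :=
  ∀ lam : ℝ, lam ∈ Ioo (0:ℝ) 1 → ∀ A B C : Set X, A.Nonempty → B.Nonempty →
    MeasurableSet A → MeasurableSet B → MeasurableSet C →
    starComb d lam A B ⊆ C →
    ENNReal.ofReal (1 - lam) * μ A + ENNReal.ofReal lam * μ B ≤ μ C

/-- `(X,d,μ)` satisfies the general inequality `B̄M(p)` for a real `p > 0`:
`μ(C) ≥ ((1-λ)μ(A)^p + λμ(B)^p)^{1/p}` for all nonempty measurable `A, B, C`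
with `C ⊇ (1-λ)A ⋆ λB`. -/
def SatisfiesBMbarPos {X : Type*} [MeasurableSpace X] (d : X → X → ℝ) (μ : Measure X)
    (p : ℝ) : Prop :=
  ∀ lam : ℝ, lam ∈ Ioo (0:ℝ) 1 → ∀ A B C : Set X, A.Nonempty → B.Nonempty →
    MeasurableSet A → MeasurableSet B → MeasurableSet C →
    starComb d lam A B ⊆ C →
    (ENNReal.ofReal (1 - lam) * μ A ^ p + ENNReal.ofReal lam * μ B ^ p) ^ (1/p) ≤ μ C

/-- `(X,d,μ)` satisfies the weighted inequality `BM(p,q)`: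
`μ(C)^p ≥ (1-λ)^q μ(A)^p + λ^q μ(B)^p` for all nonempty measurable sets of positive
measure with `C ⊇ (1-λ)A ⋆ λB`. -/
def SatisfiesBMW {X : Type*} [MeasurableSpace X] (d : X → X → ℝ) (μ : Measure X)
    (p q : ℝ) : Prop :=
  ∀ lam : ℝ, lam ∈ Ioo (0:ℝ) 1 → ∀ A B C : Set X, A.Nonempty → B.Nonempty →
    MeasurableSet A → MeasurableSet B → MeasurableSet C →
    μ A ≠ 0 → μ B ≠ 0 → starComb d lam A B ⊆ C →
    ENNReal.ofReal ((1 - lam) ^ q) * μ A ^ p + ENNReal.ofReal (lam ^ q) * μ B ^ p ≤ μ C ^ p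

/-- `(X,d,μ)` satisfies the Prékopa–Leindler inequality `PL`. -/
def SatisfiesPL {X : Type*} [MeasurableSpace X] (d : X → X → ℝ) (μ : Measure X) : Prop :=
  ∀ lam : ℝ, lam ∈ Ioo (0:ℝ) 1 → ∀ f g h : X → ℝ≥0∞,
    Measurable f → Measurable g → Measurable h →
    (∀ x y z : X, d z x = lam * d x y → d z y = (1 - lam) * d x y →
      f x ^ (1 - lam) * g y ^ lam ≤ h z) →
    (∫⁻ x, f x ∂μ) ^ (1 - lam) * (∫⁻ x, g x ∂μ) ^ lam ≤ ∫⁻ x, h x ∂μ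

open Classical in
/-- `(X,d,μ)` satisfies the Borell–Brascamp–Lieb inequality `BBL(p,m)`. -/
def SatisfiesBBL {X : Type*} [MeasurableSpace X] (d : X → X → ℝ) (μ : Measure X)
    (p m : ℝ) : Prop :=
  ∀ lam : ℝ, lam ∈ Ioo (0:ℝ) 1 → ∀ f g h : X → ℝ≥0∞,
    Measurable f → Measurable g → Measurable h →
    (∀ x y z : X, d z x = lam * d x y → d z y = (1 - lam) * d x y →
      Mp (p : EReal) lam (f x) (g y) ≤ h z) →
    Mp (if m * p + 1 = 0 then (⊥ : EReal) else ((p / (m * p + 1) : ℝ) : EReal)) lam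
      (∫⁻ x, f x ∂μ) (∫⁻ x, g x ∂μ) ≤ ∫⁻ x, h x ∂μ

/-- `φ : ℝ → ℝ` is positively decreasing: `t ↦ φ(t)` and `t ↦ φ(-t)` are
non-increasing on `[0,∞)`. -/
def PositivelyDecreasing (φ : ℝ → ℝ) : Prop :=
  (∀ s t : ℝ, 0 ≤ s → s ≤ t → φ t ≤ φ s) ∧ (∀ s t : ℝ, 0 ≤ s → s ≤ t → φ (-t) ≤ φ (-s))

/-- A set `A ⊆ ℝⁿ` is weakly unconditional. -/
def WeaklyUnconditional {n : ℕ} (A : Set (Fin n → ℝ)) : Prop :=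
  ∀ x ∈ A, ∀ ε : Fin n → ℝ, (∀ i, ε i = 0 ∨ ε i = 1) → (fun i => ε i * x i) ∈ A

/-- A nonnegative function on a real vector space is `p`-concave. -/
def PConcaveFn {E : Type*} [AddCommGroup E] [Module ℝ E] (p : EReal) (φ : E → ℝ) : Prop :=
  ∀ x y : E, ∀ lam : ℝ, lam ∈ Ioo (0:ℝ) 1 →
    MpR p lam (φ x) (φ y) ≤ φ ((1 - lam) • x + lam • y)

/-- A function on a real vector space is radially decreasing. -/
def RadiallyDecreasing {E : Type*} [AddCommGroup E] [Module ℝ E] (φ : E → ℝ) : Prop :=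
  ∀ x : E, ∀ t : ℝ, t ∈ Icc (0:ℝ) 1 → φ x ≤ φ (t • x)

/-!
The metric `ρ` is homogeneous in the two coordinate distances, so convex combinations with the same
`λ` in each coordinate form one in `X × Y`. For `z ∈ (1-λ){x} ⋆ λ{y}` in `X` the fibres therefore
satisfy `(1-λ)A_x ⋆ λB_y ⊆ C_z`, and `BM(0)` on `Y` says that the fibre measures `x ↦ μ_Y(A_x)`,
`y ↦ μ_Y(B_y)`, `z ↦ μ_Y(C_z)` satisfy the hypothesis of `PL` on `X`. Since the product measure
integrates fibre measures, the conclusion of `PL` is `BM(0)` on `X × Y`.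
-/

theorem Mp_zero {lam : ℝ} (hlam : lam ∈ Ioo (0 : ℝ) 1) (a b : ℝ≥0∞) :
    Mp 0 lam a b = a ^ (1 - lam) * b ^ lam := by
  by_cases hab : a = 0 ∨ b = 0
  · rcases hab with rfl | rfl
    · simp [Mp, ENNReal.zero_rpow_of_pos (sub_pos.2 hlam.2)]
    · simp [Mp, ENNReal.zero_rpow_of_pos hlam.1]
  · simp [Mp, hab]

theorem satisfiesBM_zero_iff {Z : Type*} [MeasurableSpace Z] {d : Z → Z → ℝ} {μ : Measure Z} :
    SatisfiesBM d μ 0 ↔ ∀ lam ∈ Ioo (0 : ℝ) 1, ∀ A B C : Set Z,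
      MeasurableSet A → MeasurableSet B → MeasurableSet C → starComb d lam A B ⊆ C →
      μ A ^ (1 - lam) * μ B ^ lam ≤ μ C := by
  refine ⟨fun hBM lam hlam A B C hA hB hC hABC => ?_,
    fun hBM lam hlam A B C _ _ hA hB hC _ _ hABC =>
      (Mp_zero hlam _ _).trans_le (hBM lam hlam A B C hA hB hC hABC)⟩
  by_cases hμA : μ A = 0
  · simp [hμA, ENNReal.zero_rpow_of_pos (sub_pos.2 hlam.2)]
  by_cases hμB : μ B = 0
  · simp [hμB, ENNReal.zero_rpow_of_pos hlam.1]
  exact (Mp_zero hlam _ _).symm.trans_le (hBM lam hlam A B C (nonempty_of_measure_ne_zero hμA)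
    (nonempty_of_measure_ne_zero hμB) hA hB hC hμA hμB hABC)

section ProductMetric

variable {X Y : Type*} [PseudoMetricSpace X] [PseudoMetricSpace Y]

theorem rho_eq_mul_rho {c : ℝ} (hc : 0 ≤ c) {p q a b : X × Y}
    (hfst : dist p.1 q.1 = c * dist a.1 b.1) (hsnd : dist p.2 q.2 = c * dist a.2 b.2) :
    rho p q = c * rho a b := by
  rw [rho, rho, hfst, hsnd, mul_pow, mul_pow, ← mul_add, Real.sqrt_mul (sq_nonneg c),
    Real.sqrt_sq hc]

theorem starComb_preimage_prodMk_subset {lam : ℝ} (hlam : lam ∈ Icc (0 : ℝ) 1) {x y z : X}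
    (hzx : dist z x = lam * dist x y) (hzy : dist z y = (1 - lam) * dist x y)
    (A B : Set (X × Y)) :
    starComb dist lam (Prod.mk x ⁻¹' A) (Prod.mk y ⁻¹' B) ⊆
      Prod.mk z ⁻¹' starComb rho lam A B := by
  rintro w ⟨a, ha, b, hb, hwa, hwb⟩
  exact ⟨(x, a), ha, (y, b), hb, rho_eq_mul_rho hlam.1 hzx hwa,
    rho_eq_mul_rho (sub_nonneg.2 hlam.2) hzy hwb⟩

end ProductMetric

section Lintegral

variable {Z : Type*} [MeasurableSpace Z] {μ : Measure Z}

theorem exists_measurable_ge_ae_eq {f : Z → ℝ≥0∞} (hf : AEMeasurable f μ) :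
    ∃ g : Z → ℝ≥0∞, Measurable g ∧ f ≤ g ∧ f =ᵐ[μ] g := by
  classical
  obtain ⟨N, hN_sub, hN_meas, hN_null⟩ := exists_measurable_superset_of_null hf.ae_eq_mk
  have hf_eq : ∀ x ∉ N, f x = hf.mk f x := fun x hx => of_not_not fun hne => hx (hN_sub hne)
  refine ⟨N.piecewise ⊤ (hf.mk f), Measurable.piecewise hN_meas measurable_const hf.measurable_mk,
    fun x => ?_, ?_⟩
  · by_cases hx : x ∈ N
    · simp [hx]
    · simp [hx, hf_eq x hx]
  · filter_upwards [measure_eq_zero_iff_ae_notMem.1 hN_null] with x hx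
    simp [hx, hf_eq x hx]

theorem SatisfiesPL.rpow_lintegral_mul_le_lintegral {d : Z → Z → ℝ} (hPL : SatisfiesPL d μ)
    {lam : ℝ} (hlam : lam ∈ Ioo (0 : ℝ) 1) {f g h : Z → ℝ≥0∞} (hh : AEMeasurable h μ)
    (hfgh : ∀ x y z : Z, d z x = lam * d x y → d z y = (1 - lam) * d x y →
      f x ^ (1 - lam) * g y ^ lam ≤ h z) :
    (∫⁻ x, f x ∂μ) ^ (1 - lam) * (∫⁻ x, g x ∂μ) ^ lam ≤ ∫⁻ x, h x ∂μ := by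
  obtain ⟨f', hf'_meas, hf'_le, hf'_eq⟩ := exists_measurable_le_lintegral_eq μ f
  obtain ⟨g', hg'_meas, hg'_le, hg'_eq⟩ := exists_measurable_le_lintegral_eq μ g
  obtain ⟨h', hh'_meas, hh'_ge, hh'_eq⟩ := exists_measurable_ge_ae_eq hh
  rw [hf'_eq, hg'_eq, lintegral_congr_ae hh'_eq]
  refine hPL lam hlam f' g' h' hf'_meas hg'_meas hh'_meas fun x y z hzx hzy => ?_
  calc f' x ^ (1 - lam) * g' y ^ lam
      ≤ f x ^ (1 - lam) * g y ^ lam :=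
        mul_le_mul' (ENNReal.rpow_le_rpow (hf'_le x) (sub_nonneg.2 hlam.2.le))
          (ENNReal.rpow_le_rpow (hg'_le y) hlam.1.le)
    _ ≤ h z := hfgh x y z hzx hzy
    _ ≤ h' z := hh'_ge z

end Lintegral

section ProductMeasure

variable {X Y : Type*} [MeasurableSpace X] [MeasurableSpace Y] {μX : Measure X} {μY : Measure Y}

-- `Measure.prod` takes the junk value `0` when the fibre measures do not depend a.e.-measurably on
-- the base point, which can happen if `μY` is not s-finite.
theorem aemeasurable_map_prodMk_of_prod_ne_zero (hprod : μX.prod μY ≠ 0) :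
    AEMeasurable (fun x => μY.map (Prod.mk x)) μX := by
  refine AEMeasurable.of_map_ne_zero fun hmap => hprod ?_
  rw [Measure.prod, Measure.bind, hmap, Measure.join_zero]

variable {S : Set (X × Y)}

theorem prod_apply_of_aemeasurable_map_prodMk
    (hμ : AEMeasurable (fun x => μY.map (Prod.mk x)) μX) (hS : MeasurableSet S) :
    μX.prod μY S = ∫⁻ x, μY (Prod.mk x ⁻¹' S) ∂μX := by
  simp only [Measure.prod, Measure.bind_apply hS hμ, Measure.map_apply measurable_prodMk_left hS]

theorem aemeasurable_measure_preimage_prodMk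
    (hμ : AEMeasurable (fun x => μY.map (Prod.mk x)) μX) (hS : MeasurableSet S) :
    AEMeasurable (fun x => μY (Prod.mk x ⁻¹' S)) μX := by
  simpa only [Function.comp_def, Measure.map_apply measurable_prodMk_left hS] using
    (Measure.measurable_coe hS).comp_aemeasurable hμ

end ProductMeasure

theorem statement8_general {X Y : Type*} [PseudoMetricSpace X] [PseudoMetricSpace Y]
    [MeasurableSpace X] [MeasurableSpace Y] {μX : Measure X} {μY : Measure Y}
    (hμ : AEMeasurable (fun x => μY.map (Prod.mk x)) μX)
    (hX : SatisfiesPL (dist : X → X → ℝ) μX) (hY : SatisfiesBM (dist : Y → Y → ℝ) μY 0) :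
    SatisfiesBM (rho : X × Y → X × Y → ℝ) (μX.prod μY) 0 := by
  rw [satisfiesBM_zero_iff] at hY ⊢
  intro lam hlam A B C hA hB hC hABC
  simp only [prod_apply_of_aemeasurable_map_prodMk hμ, hA, hB, hC]
  refine hX.rpow_lintegral_mul_le_lintegral hlam (aemeasurable_measure_preimage_prodMk hμ hC)
    fun x y z hzx hzy => ?_
  have hfibre : starComb dist lam (Prod.mk x ⁻¹' A) (Prod.mk y ⁻¹' B) ⊆ Prod.mk z ⁻¹' C :=
    (starComb_preimage_prodMk_subset (Ioo_subset_Icc_self hlam) hzx hzy A B).trans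
      (preimage_mono hABC)
  exact hY lam hlam _ _ _ (measurable_prodMk_left hA) (measurable_prodMk_left hB)
    (measurable_prodMk_left hC) hfibre

/-- Corollary `c:PL`: if `X` satisfies `PL` and `Y` satisfies `BM(0)`,
then `X × Y` satisfies `BM(0)`. -/
theorem statement8 {X Y : Type*} [MetricSpace X] [MetricSpace Y]
    [MeasurableSpace X] [OpensMeasurableSpace X] [MeasurableSpace Y] [OpensMeasurableSpace Y]
    (μX : Measure X) (μY : Measure Y) [SigmaFinite μX] [IsLocallyFiniteMeasure μY]
    [IsLocallyFiniteMeasure (μX.prod μY)]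
    (hdX : StrictlyIntrinsicDist (dist : X → X → ℝ))
    (hdY : StrictlyIntrinsicDist (dist : Y → Y → ℝ))
    (hRadon : (μX.prod μY).InnerRegular)
    (hX : SatisfiesPL (dist : X → X → ℝ) μX)
    (hY : SatisfiesBM (dist : Y → Y → ℝ) μY (0 : EReal)) :
    SatisfiesBM (rho : X × Y → X × Y → ℝ) (μX.prod μY) (0 : EReal) := by
  by_cases hprod : μX.prod μY = 0
  · simp [SatisfiesBM, hprod]
  · exact statement8_general (aemeasurable_map_prodMk_of_prod_ne_zero hprod) hX hY

end
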